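/- arXiv:math/0005058 — 4 statements merged into one kernel-verified Lean document; each statement's English description precedes it below -/
import Mathlib

section
/- Generalized Feinstein's lemma (Lemma 3.1). Fix n ≥ 1, a probability mass function P_{Vⁿ} on 𝒱ⁿ, a channel Wⁿ, and any joint distribution P_{VⁿXⁿ} on 𝒱ⁿ × 𝒳ⁿ whose 𝒱ⁿ-marginal is P_{Vⁿ}; let (Vⁿ, Xⁿ, Yⁿ) have the joint law P_{VⁿXⁿ}(v,x)Wⁿ(y|x) with output marginal P_{Yⁿ}. Then for every γ > 0 there exists a joint source-channel code (φₙ, ψₙ) whose error probability εₙ satisfies εₙ ≤ Pr{ (1/n) log( Wⁿ(Yⁿ|Xⁿ) / P_{Yⁿ}(Yⁿ) ) ≤ (1/n) log( 1 / P_{Vⁿ}(Vⁿ) ) + γ } + e^{−nγ}. -/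
open Filter Real Topology

namespace ISC

/-- Words of length `n` over alphabet `A`. -/
abbrev Word (A : Type*) (n : ℕ) : Type _ := Fin n → A

/-- `p` is a probability mass function. -/
def IsPMF {α : Type*} (p : α → ℝ) : Prop :=
  (∀ a, 0 ≤ p a) ∧ HasSum p 1

/-- Probability of the event `S` under the pmf `p`. -/
noncomputable def prob {α : Type*} (p : α → ℝ) (S : Set α) : ℝ :=
  ∑' a, S.indicator p a

/-- Output marginal `P_{Yⁿ}` of the channel `W` fed with the joint input law `P_{VⁿXⁿ}`. -/
noncomputable def outDist {𝒱 𝒳 𝒴 : Type*} {n : ℕ}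
    (PVX : Word 𝒱 n × Word 𝒳 n → ℝ) (W : Word 𝒳 n → Word 𝒴 n → ℝ)
    (y : Word 𝒴 n) : ℝ :=
  ∑' vx : Word 𝒱 n × Word 𝒳 n, PVX vx * W vx.2 y

/-- Joint law of `(Vⁿ, Xⁿ, Yⁿ)`: `P_{VⁿXⁿ}(v,x) · Wⁿ(y|x)`. -/
noncomputable def jointLaw {𝒱 𝒳 𝒴 : Type*} {n : ℕ}
    (PVX : Word 𝒱 n × Word 𝒳 n → ℝ) (W : Word 𝒳 n → Word 𝒴 n → ℝ) :
    Word 𝒱 n × Word 𝒳 n × Word 𝒴 n → ℝ :=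
  fun z => PVX (z.1, z.2.1) * W z.2.1 z.2.2

/-- The joint input law `P_{VⁿXⁿ}` induced by the deterministic encoder `φ`:
`P_{Vⁿ}(v) 1{x = φ(v)}`. -/
noncomputable def codeInput {𝒱 𝒳 : Type*} [DecidableEq 𝒳] {n : ℕ} (PV : Word 𝒱 n → ℝ)
    (φ : Word 𝒱 n → Word 𝒳 n) : Word 𝒱 n × Word 𝒳 n → ℝ :=
  fun vx => if vx.2 = φ vx.1 then PV vx.1 else 0

/-- Error probability `εₙ` of the joint source-channel code `(φ, ψ)`. -/
noncomputable def errProb {𝒱 𝒳 𝒴 : Type*} {n : ℕ}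
    (PV : Word 𝒱 n → ℝ) (W : Word 𝒳 n → Word 𝒴 n → ℝ)
    (φ : Word 𝒱 n → Word 𝒳 n) (ψ : Word 𝒴 n → Word 𝒱 n) : ℝ :=
  ∑' v, PV v * prob (W (φ v)) {y | ψ y ≠ v}

/-- `V` is transmissible over `W`. -/
def Transmissible {𝒱 𝒳 𝒴 : Type*} (PV : (n : ℕ) → Word 𝒱 n → ℝ)
    (W : (n : ℕ) → Word 𝒳 n → Word 𝒴 n → ℝ) : Prop :=
  ∃ (φ : (n : ℕ) → Word 𝒱 n → Word 𝒳 n) (ψ : (n : ℕ) → Word 𝒴 n → Word 𝒱 n),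
    Tendsto (fun n => errProb (PV n) (W n) (φ n) (ψ n)) atTop (nhds 0)

/-- Output marginal of the channel `W` for an input distribution `P_{Xⁿ}`. -/
noncomputable def outDistX {𝒳 𝒴 : Type*} {n : ℕ}
    (PX : Word 𝒳 n → ℝ) (W : Word 𝒳 n → Word 𝒴 n → ℝ) (y : Word 𝒴 n) : ℝ :=
  ∑' x : Word 𝒳 n, PX x * W x y

/-- Joint law of `(Xⁿ, Yⁿ)`: `P_{Xⁿ}(x) · Wⁿ(y|x)`. -/
noncomputable def jointXY {𝒳 𝒴 : Type*} {n : ℕ}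
    (PX : Word 𝒳 n → ℝ) (W : Word 𝒳 n → Word 𝒴 n → ℝ) :
    Word 𝒳 n × Word 𝒴 n → ℝ :=
  fun z => PX z.1 * W z.1 z.2

/-- Limit superior in probability of a sequence of random variables `Z i`
distributed according to the pmfs `p i`. -/
noncomputable def plimsup {α : ℕ → Type*} (p : (i : ℕ) → α i → ℝ)
    (Z : (i : ℕ) → α i → ℝ) : EReal :=
  sInf {β : EReal |
    Tendsto (fun i => prob (p i) {a | β < (Z i a : EReal)}) atTop (nhds 0)}

/-- Limit inferior in probability of a sequence of random variables `Z i`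
distributed according to the pmfs `p i`. -/
noncomputable def pliminf {α : ℕ → Type*} (p : (i : ℕ) → α i → ℝ)
    (Z : (i : ℕ) → α i → ℝ) : EReal :=
  sSup {β : EReal |
    Tendsto (fun i => prob (p i) {a | (Z i a : EReal) < β}) atTop (nhds 0)}

/-- Spectral sup-entropy rate `H̄(V)`. -/
noncomputable def Hbar {𝒱 : Type*} (PV : (n : ℕ) → Word 𝒱 n → ℝ) : EReal :=
  plimsup (fun n => PV n) (fun n v => (1 / (n : ℝ)) * Real.log (1 / PV n v))

/-- Spectral inf-entropy rate `H_(V)`. -/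
noncomputable def Hlow {𝒱 : Type*} (PV : (n : ℕ) → Word 𝒱 n → ℝ) : EReal :=
  pliminf (fun n => PV n) (fun n v => (1 / (n : ℝ)) * Real.log (1 / PV n v))

/-- Spectral inf-information rate `I_(X;Y)` of the channel `W` with input `X`. -/
noncomputable def Ilow {𝒳 𝒴 : Type*} (PX : (n : ℕ) → Word 𝒳 n → ℝ)
    (W : (n : ℕ) → Word 𝒳 n → Word 𝒴 n → ℝ) : EReal :=
  pliminf (fun n => jointXY (PX n) (W n))
    (fun n z => (1 / (n : ℝ)) * Real.log (W n z.1 z.2 / outDistX (PX n) (W n) z.2))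

/-- Spectral sup-information rate `Ī(X;Y)` of the channel `W` with input `X`. -/
noncomputable def Ihigh {𝒳 𝒴 : Type*} (PX : (n : ℕ) → Word 𝒳 n → ℝ)
    (W : (n : ℕ) → Word 𝒳 n → Word 𝒴 n → ℝ) : EReal :=
  plimsup (fun n => jointXY (PX n) (W n))
    (fun n z => (1 / (n : ℝ)) * Real.log (W n z.1 z.2 / outDistX (PX n) (W n) z.2))

/-- `sup_X I_(X;Y)`: the supremum over all channel inputs. -/
noncomputable def supIlow {𝒳 𝒴 : Type*}
    (W : (n : ℕ) → Word 𝒳 n → Word 𝒴 n → ℝ) : EReal :=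
  ⨆ PX : {PX : (n : ℕ) → Word 𝒳 n → ℝ // ∀ n, IsPMF (PX n)}, Ilow PX.1 W


open MeasureTheory ProbabilityTheory in
lemma exists_cond {X : Type*} [Countable X] [Nonempty X] [MeasurableSpace X]
    [MeasurableSingletonClass X] (q : X → ENNReal) (p : ENNReal) (hp : p ≠ ⊤)
    (h : ∑' x, q x = p) :
    ∃ μ : Measure X, IsProbabilityMeasure μ ∧ ∀ x, p * μ {x} = q x := by
  by_cases h0 : p = 0
  · refine ⟨Measure.dirac (Classical.arbitrary X), inferInstance, fun x => ?_⟩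
    subst h0
    rw [ENNReal.tsum_eq_zero] at h
    simp [h x]
  · refine ⟨(PMF.normalize q (h ▸ h0) (h ▸ hp)).toMeasure, inferInstance, fun x => ?_⟩
    rw [PMF.toMeasure_apply_singleton _ _ (measurableSet_singleton x), PMF.normalize_apply, h,
      mul_comm, mul_assoc, ENNReal.inv_mul_cancel h0 hp, mul_one]

open MeasureTheory ProbabilityTheory Classical in
lemma core {V X Y : Type*} [Countable V] [Countable X] [Countable Y] [Nonempty X]
    (p : V → ENNReal) (hp : ∑' v, p v = 1) (w : X → Y → ENNReal) (hw : ∀ x, ∑' y, w x y = 1)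
    (Q : V → X → ENNReal) (hQ : ∀ v, ∑' x, Q v x = p v) (c : ENNReal)
    (PY : Y → ENNReal) (hPY : ∀ y, PY y = ∑' v, ∑' x, Q v x * w x y)
    (T : V → X → Y → Prop) (hT : ∀ v x y, T v x y → PY y ≤ w x y * p v * c) :
    ∃ φ : V → X,
      ∑' v, p v * ∑' y, (w (φ v) y * (if T v (φ v) y then 0 else 1) +
        ∑' v', if v' = v then 0 else w (φ v) y * (if T v' (φ v') y then 1 else 0))
      ≤ (∑' v, ∑' x, ∑' y, Q v x * w x y * (if T v x y then 0 else 1)) + c := by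
  let _ : MeasurableSpace X := ⊤
  have hpt : ∀ v, p v ≠ ⊤ := fun v => ne_top_of_le_ne_top ENNReal.one_ne_top (hp ▸ ENNReal.le_tsum v)
  choose ν hν hνQ using fun v => exists_cond (Q v) (p v) (hpt v) (hQ v)
  let μ : Measure (V → X) := Measure.infinitePi ν
  have hm : ∀ (v : V) (g : X → ENNReal), Measurable (fun φ : V → X => g (φ v)) := fun v g =>
    (measurable_from_top (f := g)).comp (measurable_pi_apply v)
  have hint : ∀ (v : V) (g : X → ENNReal), ∫⁻ φ, g (φ v) ∂μ = ∑' x, g x * ν v {x} := by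
    intro v g
    rw [← lintegral_countable', ← (measurePreserving_eval_infinitePi ν v).lintegral_comp
      measurable_from_top]
  have hint2 : ∀ (v v' : V) (_ : v' ≠ v) (g g' : X → ENNReal),
      ∫⁻ φ, g (φ v) * g' (φ v') ∂μ = (∑' x, g x * ν v {x}) * ∑' x, g' x * ν v' {x} := by
    intro v v' hv g g'
    rw [← hint, ← hint]
    have hind : iIndepFun (fun (i : V) (φ : V → X) => φ i) μ :=
      iIndepFun_infinitePi (P := ν) (X := fun _ x => x) (fun _ => measurable_id)
    have h2 : IndepFun (fun φ : V → X => g (φ v)) (fun φ : V → X => g' (φ v')) μ :=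
      (hind.indepFun hv.symm).comp (measurable_from_top (f := g)) (measurable_from_top (f := g'))
    exact lintegral_mul_eq_lintegral_mul_lintegral_of_indepFun (hm v g) (hm v' g') h2
  have hmc : ∀ v y v', Measurable (fun φ : V → X => if v' = v then (0 : ENNReal) else
      w (φ v) y * (if T v' (φ v') y then 1 else 0)) := by
    intro v y v'
    by_cases h : v' = v
    · simp [h]
    · simp only [h, if_false]
      exact (hm v (fun x => w x y)).mul (hm v' (fun x => if T v' x y then 1 else 0))
  have hm1 : ∀ v y, Measurable (fun φ : V → X => w (φ v) y * (if T v (φ v) y then 0 else 1)) :=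
    fun v y => hm v (fun x => w x y * (if T v x y then 0 else 1))
  have hm2 : ∀ v y, Measurable (fun φ : V → X => (w (φ v) y * (if T v (φ v) y then 0 else 1) +
        ∑' v', if v' = v then 0 else w (φ v) y * (if T v' (φ v') y then 1 else 0))) :=
    fun v y => (hm1 v y).add (Measurable.tsum fun v' => hmc v y v')
  have hm3 : ∀ v, Measurable (fun φ : V → X => ∑' y, (w (φ v) y * (if T v (φ v) y then 0 else 1) +
        ∑' v', if v' = v then 0 else w (φ v) y * (if T v' (φ v') y then 1 else 0))) :=
    fun v => Measurable.tsum fun y => hm2 v y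
  have hm4 : ∀ v, Measurable (fun φ : V → X => p v * ∑' y, (w (φ v) y * (if T v (φ v) y then 0 else 1) +
        ∑' v', if v' = v then 0 else w (φ v) y * (if T v' (φ v') y then 1 else 0))) :=
    fun v => (hm3 v).const_mul _
  have hm5 := Measurable.tsum (L := SummationFilter.unconditional V) hm4
  obtain ⟨φ, hφ⟩ := exists_le_lintegral (μ := μ) hm5.aemeasurable
  refine ⟨φ, hφ.trans ?_⟩
  rw [lintegral_tsum fun v => (hm4 v).aemeasurable]
  have e1 : ∀ v, ∫⁻ φ : V → X, p v * ∑' y, (w (φ v) y * (if T v (φ v) y then 0 else 1) +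
        ∑' v', if v' = v then 0 else w (φ v) y * (if T v' (φ v') y then 1 else 0)) ∂μ
      ≤ (∑' x, ∑' y, Q v x * w x y * (if T v x y then 0 else 1)) +
        ∑' y, ∑' v', (∑' x, Q v x * w x y) * ∑' x', (if T v' x' y then 1 else 0) * ν v' {x'} := by
    intro v
    rw [lintegral_const_mul _ (hm3 v), lintegral_tsum fun y => (hm2 v y).aemeasurable]
    have e2 : ∀ y, ∫⁻ φ : V → X, (w (φ v) y * (if T v (φ v) y then 0 else 1) +
        ∑' v', if v' = v then 0 else w (φ v) y * (if T v' (φ v') y then 1 else 0)) ∂μ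
        ≤ (∑' x, w x y * (if T v x y then 0 else 1) * ν v {x}) +
          ∑' v', (∑' x, w x y * ν v {x}) * ∑' x', (if T v' x' y then 1 else 0) * ν v' {x'} := by
      intro y
      rw [lintegral_add_left (hm1 v y), lintegral_tsum fun v' => (hmc v y v').aemeasurable,
        hint v (fun x => w x y * (if T v x y then 0 else 1))]
      gcongr with v'
      by_cases h : v' = v
      · simp [h]
      · simp only [h, if_false]
        exact (hint2 v v' h (fun x => w x y) (fun x => if T v' x y then 1 else 0)).le
    refine (mul_le_mul_right (ENNReal.tsum_le_tsum e2) (p v)).trans ?_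
    rw [ENNReal.tsum_add, mul_add, ENNReal.tsum_comm]
    apply le_of_eq
    congr 1
    · rw [← ENNReal.tsum_mul_left]
      refine tsum_congr fun x => ?_
      rw [← ENNReal.tsum_mul_left]
      refine tsum_congr fun y => ?_
      rw [← hνQ]; ring
    · rw [← ENNReal.tsum_mul_left]
      refine tsum_congr fun y => ?_
      rw [← ENNReal.tsum_mul_left]
      refine tsum_congr fun v' => ?_
      rw [← mul_assoc]
      congr 1
      rw [← ENNReal.tsum_mul_left]
      refine tsum_congr fun x => ?_
      rw [← hνQ]; ring
  refine (ENNReal.tsum_le_tsum e1).trans ?_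
  rw [ENNReal.tsum_add]
  gcongr
  calc _ = ∑' y, ∑' v', PY y * ∑' x', (if T v' x' y then 1 else 0) * ν v' {x'} := by
        rw [ENNReal.tsum_comm]
        refine tsum_congr fun y => ?_
        rw [ENNReal.tsum_comm]
        refine tsum_congr fun v' => ?_
        rw [ENNReal.tsum_mul_right, hPY]
    _ ≤ ∑' y, ∑' v', ∑' x', Q v' x' * w x' y * c := by
        refine ENNReal.tsum_le_tsum fun y => ENNReal.tsum_le_tsum fun v' => ?_
        rw [← ENNReal.tsum_mul_left]
        refine ENNReal.tsum_le_tsum fun x => ?_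
        by_cases h : T v' x y
        · simp only [h, if_true, one_mul]
          calc _ ≤ w x y * p v' * c * ν v' {x} := by gcongr; exact hT _ _ _ h
            _ = _ := by rw [← hνQ]; ring
        · simp [h]
    _ = ∑' v', ∑' x', ∑' y, Q v' x' * w x' y * c := by
        rw [ENNReal.tsum_comm]
        refine tsum_congr fun v' => ?_
        rw [ENNReal.tsum_comm]
    _ = c := by
        simp_rw [ENNReal.tsum_mul_right, ENNReal.tsum_mul_left, hw, mul_one, hQ, hp, one_mul]

lemma summable_of_ofReal {α : Type*} (f : α → ℝ) (hf : ∀ a, 0 ≤ f a)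
    (h : ∑' a, ENNReal.ofReal (f a) ≠ ⊤) : Summable f := by
  have := ENNReal.summable_toReal h
  simpa [ENNReal.toReal_ofReal, hf] using this

lemma tsum_ofReal_pmf {α : Type*} {f : α → ℝ} (hf : IsPMF f) :
    ∑' a, ENNReal.ofReal (f a) = 1 := by
  rw [← ENNReal.ofReal_tsum_of_nonneg hf.1 hf.2.summable, hf.2.tsum_eq, ENNReal.ofReal_one]

open Classical in
lemma ofReal_prob {α : Type*} (f : α → ℝ) (hf : ∀ a, 0 ≤ f a) (hs : Summable f) (S : Set α) :
    ENNReal.ofReal (prob f S) = ∑' a, ENNReal.ofReal (f a) * (if a ∈ S then 1 else 0) := by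
  unfold prob
  rw [ENNReal.ofReal_tsum_of_nonneg (fun a => Set.indicator_nonneg (fun a _ => hf a) a)
    (hs.indicator S)]
  refine tsum_congr fun a => ?_
  by_cases h : a ∈ S <;> simp [h]

lemma prob_nonneg {α : Type*} (f : α → ℝ) (hf : ∀ a, 0 ≤ f a) (S : Set α) : 0 ≤ prob f S :=
  tsum_nonneg (fun a => Set.indicator_nonneg (fun a _ => hf a) a)

lemma prob_le_one {α : Type*} (f : α → ℝ) (hf : IsPMF f) (S : Set α) : prob f S ≤ 1 := by
  rw [← hf.2.tsum_eq]
  exact (hf.2.summable.indicator S).tsum_le_tsum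
    (fun a => Set.indicator_le_self' (fun a _ => hf.1 a) a) hf.2.summable

/-- **Generalized Feinstein's lemma** (Lemma 3.1). -/
theorem generalized_feinstein_lemma
    {𝒱 𝒳 𝒴 : Type} [Countable 𝒱] [Countable 𝒳] [Countable 𝒴]
    (n : ℕ) (hn : 1 ≤ n)
    (PV : Word 𝒱 n → ℝ) (hPV : IsPMF PV)
    (W : Word 𝒳 n → Word 𝒴 n → ℝ) (hW : ∀ x, IsPMF (W x))
    (PVX : Word 𝒱 n × Word 𝒳 n → ℝ) (hPVX : IsPMF PVX)
    (hmarg : ∀ v, (∑' x : Word 𝒳 n, PVX (v, x)) = PV v)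
    (γ : ℝ) (hγ : 0 < γ) :
    ∃ (φ : Word 𝒱 n → Word 𝒳 n) (ψ : Word 𝒴 n → Word 𝒱 n),
      errProb PV W φ ψ ≤
        prob (jointLaw PVX W)
          {z : Word 𝒱 n × Word 𝒳 n × Word 𝒴 n |
            (1 / (n : ℝ)) * Real.log (W z.2.1 z.2.2 / outDist PVX W z.2.2) ≤
              (1 / (n : ℝ)) * Real.log (1 / PV z.1) + γ}
        + Real.exp (-((n : ℝ) * γ)) := by
  classical
  have hne : Nonempty (Word 𝒱 n × Word 𝒳 n) := by
    by_contra h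
    rw [not_nonempty_iff] at h
    have := hPVX.2.tsum_eq
    simp at this
  obtain ⟨v₀, x₀⟩ := hne
  have : Nonempty (Word 𝒳 n) := ⟨x₀⟩
  have hn0 : (0 : ℝ) < n := by exact_mod_cast hn
  have hsW : ∀ y, Summable (fun vx : Word 𝒱 n × Word 𝒳 n => PVX vx * W vx.2 y) := by
    intro y
    refine Summable.of_nonneg_of_le (fun vx => mul_nonneg (hPVX.1 _) ((hW _).1 _)) (fun vx => ?_)
      hPVX.2.summable
    exact mul_le_of_le_one_right (hPVX.1 _)
      ((hW vx.2).2.tsum_eq ▸ (hW vx.2).2.summable.le_tsum y (fun j _ => (hW vx.2).1 j))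
  let T : Word 𝒱 n → Word 𝒳 n → Word 𝒴 n → Prop := fun v x y =>
    outDist PVX W y < W x y * PV v * Real.exp (-((n : ℝ) * γ))
  have hjoint : ∑' z, ENNReal.ofReal (jointLaw PVX W z) = 1 := by
    simp_rw [jointLaw, ENNReal.ofReal_mul (hPVX.1 _)]
    rw [ENNReal.tsum_prod', ← tsum_ofReal_pmf hPVX, ENNReal.tsum_prod']
    refine tsum_congr fun v => ?_
    rw [ENNReal.tsum_prod']
    refine tsum_congr fun x => ?_
    simp only
    rw [ENNReal.tsum_mul_left, tsum_ofReal_pmf (hW x), mul_one]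
  have hjn : ∀ z, 0 ≤ jointLaw PVX W z := fun z => mul_nonneg (hPVX.1 _) ((hW _).1 _)
  have hjs : Summable (jointLaw PVX W) := summable_of_ofReal _ hjn (by simp [hjoint])
  obtain ⟨φ, hφ⟩ := core (fun v => ENNReal.ofReal (PV v)) (tsum_ofReal_pmf hPV)
    (fun x y => ENNReal.ofReal (W x y)) (fun x => tsum_ofReal_pmf (hW x))
    (fun v x => ENNReal.ofReal (PVX (v, x)))
    (fun v => by
      rw [← hmarg, ENNReal.ofReal_tsum_of_nonneg (fun x => hPVX.1 _)
        (hPVX.2.summable.prod_factor v)])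
    (ENNReal.ofReal (Real.exp (-((n : ℝ) * γ))))
    (fun y => ENNReal.ofReal (outDist PVX W y))
    (fun y => by
      rw [outDist, ENNReal.ofReal_tsum_of_nonneg
        (fun vx => mul_nonneg (hPVX.1 _) ((hW _).1 _)) (hsW y), ENNReal.tsum_prod']
      simp_rw [ENNReal.ofReal_mul (hPVX.1 _)])
    T
    (fun v x y h => by
      rw [← ENNReal.ofReal_mul ((hW x).1 y),
        ← ENNReal.ofReal_mul (mul_nonneg ((hW x).1 y) (hPV.1 v))]
      exact ENNReal.ofReal_le_ofReal h.le)
  let ψ : Word 𝒴 n → Word 𝒱 n := fun y =>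
    if h : ∃ v, T v (φ v) y then h.choose else v₀
  refine ⟨φ, ψ, ?_⟩
  rw [← ENNReal.ofReal_le_ofReal_iff (add_nonneg (prob_nonneg _ hjn _) (Real.exp_pos _).le),
    ENNReal.ofReal_add (prob_nonneg _ hjn _) (Real.exp_pos _).le]
  refine le_trans ?_ (hφ.trans ?_)
  · rw [errProb, ENNReal.ofReal_tsum_of_nonneg
      (fun v => mul_nonneg (hPV.1 v) (prob_nonneg _ (hW _).1 _))
      (Summable.of_nonneg_of_le (fun v => mul_nonneg (hPV.1 v) (prob_nonneg _ (hW _).1 _))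
        (fun v => mul_le_of_le_one_right (hPV.1 v) (prob_le_one _ (hW _) _)) hPV.2.summable)]
    refine ENNReal.tsum_le_tsum fun v => ?_
    rw [ENNReal.ofReal_mul (hPV.1 v), ofReal_prob _ (hW _).1 (hW _).2.summable]
    gcongr with y
    by_cases hv : ψ y = v
    · simp [hv]
    by_cases hTv : T v (φ v) y
    · have hex : ∃ v, T v (φ v) y := ⟨v, hTv⟩
      have hT' : T (ψ y) (φ (ψ y)) y := by
        have : ψ y = hex.choose := dif_pos hex
        rw [this]
        exact hex.choose_spec
      refine le_trans ?_ le_add_self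
      refine le_trans ?_ (ENNReal.le_tsum (ψ y))
      simp [hv, hT']
    · refine le_trans ?_ le_self_add
      simp [hv, hTv]
  · gcongr
    rw [ofReal_prob _ hjn hjs, ENNReal.tsum_prod']
    refine ENNReal.tsum_le_tsum fun v => ?_
    rw [ENNReal.tsum_prod']
    refine ENNReal.tsum_le_tsum fun x => ENNReal.tsum_le_tsum fun y => ?_
    rw [jointLaw, ENNReal.ofReal_mul (hPVX.1 _)]
    by_cases hTv : T v x y
    · simp [hTv]
    rcases (hPVX.1 (v, x)).eq_or_lt with h0 | hq
    · simp [← h0]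
    rcases ((hW x).1 y).eq_or_lt with h0 | hw
    · simp [← h0]
    have hpv : 0 < PV v := by
      rw [← hmarg]
      exact (hPVX.2.summable.prod_factor v).tsum_pos (fun _ => hPVX.1 _) x hq
    have hpy : 0 < outDist PVX W y :=
      (hsW y).tsum_pos (fun _ => mul_nonneg (hPVX.1 _) ((hW _).1 _)) (v, x) (mul_pos hq hw)
    have hmem : (1 / (n : ℝ)) * Real.log (W x y / outDist PVX W y) ≤
              (1 / (n : ℝ)) * Real.log (1 / PV v) + γ := by
      have h1 : W x y * PV v * Real.exp (-((n : ℝ) * γ)) ≤ outDist PVX W y := not_lt.mp hTv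
      have h2 := Real.log_le_log (by positivity) h1
      rw [Real.log_mul (by positivity) (by positivity), Real.log_mul hw.ne' hpv.ne',
        Real.log_exp] at h2
      rw [Real.log_div hw.ne' hpy.ne', one_div (PV v), Real.log_inv]
      have h3 : (1 / (n : ℝ)) * (Real.log (W x y) - Real.log (outDist PVX W y)) ≤
        (1 / (n : ℝ)) * (-Real.log (PV v) + n * γ) := by gcongr; linarith
      refine h3.trans (le_of_eq ?_)
      field_simp
    rw [if_neg hTv, if_pos (Set.mem_setOf_eq ▸ hmem)]

end ISC
end

section
/- Generalized Verdú–Han lemma (Lemma 3.2). Fix n ≥ 1, a probability mass function P_{Vⁿ} on 𝒱ⁿ, a channel Wⁿ, and any joint source-channel code (φₙ, ψₙ) with error probability εₙ. Put Xⁿ = φₙ(Vⁿ) and let Yⁿ be the channel output, i.e. (Vⁿ, Xⁿ, Yⁿ) has joint law P_{Vⁿ}(v) 1{x = φₙ(v)} Wⁿ(y|x), with output marginal P_{Yⁿ}. Then for every γ > 0, εₙ ≥ Pr{ (1/n) log( Wⁿ(Yⁿ|Xⁿ) / P_{Yⁿ}(Yⁿ) ) ≤ (1/n) log( 1 / P_{Vⁿ}(Vⁿ)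 ) − γ } − e^{−nγ}. -/
open Filter Real Topology

namespace ISC

/-- **Generalized Verdú–Han lemma** (Lemma 3.2). -/
theorem generalized_verdu_han_lemma
    {𝒱 𝒳 𝒴 : Type} [Countable 𝒱] [Countable 𝒳] [Countable 𝒴] [DecidableEq 𝒳]
    (n : ℕ) (hn : 1 ≤ n)
    (PV : Word 𝒱 n → ℝ) (hPV : IsPMF PV)
    (W : Word 𝒳 n → Word 𝒴 n → ℝ) (hW : ∀ x, IsPMF (W x))
    (φ : Word 𝒱 n → Word 𝒳 n) (ψ : Word 𝒴 n → Word 𝒱 n)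
    (γ : ℝ) (hγ : 0 < γ) :
    prob (jointLaw (codeInput PV φ) W)
      {z : Word 𝒱 n × Word 𝒳 n × Word 𝒴 n |
        (1 / (n : ℝ)) * Real.log (W z.2.1 z.2.2 / outDist (codeInput PV φ) W z.2.2) ≤
          (1 / (n : ℝ)) * Real.log (1 / PV z.1) - γ}
    - Real.exp (-((n : ℝ) * γ)) ≤ errProb PV W φ ψ := by
  classical
  have hPV0 := hPV.1
  have hW0 := fun x => (hW x).1
  have hn0 : (0 : ℝ) < n := by exact_mod_cast hn
  set q : Word 𝒱 n × Word 𝒴 n → ℝ := fun p => PV p.1 * W (φ p.1) p.2 with hq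
  have hq0 : ∀ p, 0 ≤ q p := fun p => mul_nonneg (hPV0 _) (hW0 _ _)
  have hqrow : ∀ v, HasSum (fun y => q (v, y)) (PV v) := fun v => by
    simpa [hq] using (hW (φ v)).2.mul_left (PV v)
  have hqs : Summable q := by
    rw [summable_prod_of_nonneg hq0]
    refine ⟨fun v => (hqrow v).summable, ?_⟩
    simp_rw [fun v => (hqrow v).tsum_eq]
    exact hPV.2.summable
  have hq1 : HasSum q 1 := by
    have h := hqs.hasSum
    have h2 := (h.prod_fiberwise hqrow).unique hPV.2
    rwa [h2] at h
  set Q : Word 𝒴 n → ℝ := outDist (codeInput PV φ) W with hQ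
  have hqcol : ∀ y, Summable (fun v => q (v, y)) := fun y =>
    hqs.comp_injective (i := fun v => (v, y)) (fun a b h => by simpa using h)
  have hQeq : ∀ y, Q y = ∑' v, q (v, y) := fun y => by
    have hinj : Function.Injective (fun v : Word 𝒱 n => (v, φ v)) := fun a b h => by
      simpa using (Prod.ext_iff.1 h).1
    have := hinj.tsum_eq (f := fun vx : Word 𝒱 n × Word 𝒳 n => codeInput PV φ vx * W vx.2 y) (by
      rintro ⟨v, x⟩ h
      by_cases hx : x = φ v
      · exact ⟨v, by simp [hx]⟩
      · simp [codeInput, hx] at h)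
    rw [hQ, outDist, ← this]
    simp [codeInput, hq]
  have hQ1 : HasSum Q 1 := by
    have h : HasSum (q ∘ Prod.swap) 1 := (Equiv.prodComm (Word 𝒴 n) (Word 𝒱 n)).hasSum_iff.2 hq1
    refine h.prod_fiberwise fun y => ?_
    rw [hQeq]
    exact (hqcol y).hasSum
  have hqQ : ∀ v y, q (v, y) ≤ Q y := fun v y => by
    rw [hQeq]
    exact (hqcol y).le_tsum v (fun _ _ => hq0 _)
  have hQ0 : ∀ y, 0 ≤ Q y := fun y => by
    rw [hQeq]; exact tsum_nonneg fun _ => hq0 _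
  set g : Word 𝒱 n × Word 𝒴 n → ℝ := fun p => if ψ p.2 = p.1 then Q p.2 else 0 with hg
  have hg1 : HasSum g 1 := by
    have hinj : Function.Injective (fun y : Word 𝒴 n => (ψ y, y)) := fun a b h => by
      simpa using (Prod.ext_iff.1 h).2
    refine (hinj.hasSum_iff ?_).1 ?_
    · rintro ⟨v, y⟩ h
      have : ψ y ≠ v := fun e => h ⟨y, by simp [e]⟩
      simp [hg, this]
    · have : g ∘ (fun y : Word 𝒴 n => (ψ y, y)) = Q := by
        funext y; simp [hg]
      rw [this]; exact hQ1
  set e : Word 𝒱 n × Word 𝒴 n → ℝ := {p | ψ p.2 ≠ p.1}.indicator q with he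
  have hes : Summable e := hqs.indicator _
  have heq : errProb PV W φ ψ = ∑' p, e p := by
    rw [hes.tsum_prod, errProb]
    refine tsum_congr fun v => ?_
    rw [prob, ← tsum_mul_left]
    refine tsum_congr fun y => ?_
    by_cases h : ψ y = v <;> simp [he, hq, Set.indicator, h]
  set S : Set (Word 𝒱 n × Word 𝒳 n × Word 𝒴 n) := {z |
        (1 / (n : ℝ)) * Real.log (W z.2.1 z.2.2 / Q z.2.2) ≤
          (1 / (n : ℝ)) * Real.log (1 / PV z.1) - γ} with hS
  set T : Set (Word 𝒱 n × Word 𝒴 n) := {p | (p.1, φ p.1, p.2) ∈ S} with hT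
  have hprob : prob (jointLaw (codeInput PV φ) W) S = ∑' p, T.indicator q p := by
    have hinj : Function.Injective (fun p : Word 𝒱 n × Word 𝒴 n => (p.1, φ p.1, p.2)) := by
      rintro ⟨a, b⟩ ⟨c, d⟩ h
      simp only [Prod.mk.injEq] at h
      simp [h.1, h.2.2]
    have := hinj.tsum_eq (f := S.indicator (jointLaw (codeInput PV φ) W)) (by
      rintro ⟨v, x, y⟩ h
      by_cases hx : x = φ v
      · exact ⟨(v, y), by simp [hx]⟩
      · simp [jointLaw, codeInput, hx] at h)
    rw [prob, ← this]
    refine tsum_congr fun p => ?_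
    by_cases h : (p.1, φ p.1, p.2) ∈ S
    · rw [Set.indicator_of_mem h, Set.indicator_of_mem (show p ∈ T from h)]
      simp [jointLaw, codeInput, hq]
    · rw [Set.indicator_of_notMem h, Set.indicator_of_notMem (show p ∉ T from h)]
  have hpt : ∀ p, T.indicator q p ≤ e p + Real.exp (-((n : ℝ) * γ)) * g p := by
    rintro ⟨v, y⟩
    have hE := Real.exp_pos (-((n : ℝ) * γ))
    by_cases hd : ψ y = v
    · have h1 : e (v, y) = 0 := by simp [he, hd]
      have h2 : g (v, y) = Q y := by simp [hg, hd]
      rw [h1, h2, zero_add]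
      by_cases hm : (v, y) ∈ T
      · rw [Set.indicator_of_mem hm]
        rcases (hq0 (v, y)).eq_or_lt with h0 | h0
        · rw [← h0]; exact mul_nonneg hE.le (hQ0 y)
        have hQp : 0 < Q y := h0.trans_le (hqQ v y)
        have h0' : 0 < PV v * W (φ v) y := h0
        have hPp : 0 < PV v := (hPV0 v).lt_of_ne' (left_ne_zero_of_mul h0'.ne')
        have hWp : 0 < W (φ v) y := (hW0 _ y).lt_of_ne' (right_ne_zero_of_mul h0'.ne')
        have hm' : (1 / (n : ℝ)) * Real.log (W (φ v) y / Q y) ≤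
          (1 / (n : ℝ)) * Real.log (1 / PV v) - γ := hm
        rw [Real.log_div hWp.ne' hQp.ne', one_div (PV v), Real.log_inv] at hm'
        have h3 : Real.log (W (φ v) y) - Real.log (Q y) ≤ - Real.log (PV v) - n * γ := by
          have := mul_le_mul_of_nonneg_left hm' hn0.le
          field_simp at this
          linarith
        have h4 : Real.log (PV v * W (φ v) y) ≤ Real.log (Real.exp (-((n : ℝ) * γ)) * Q y) := by
          rw [Real.log_mul hPp.ne' hWp.ne', Real.log_mul hE.ne' hQp.ne', Real.log_exp]
          linarith
        exact (Real.log_le_log_iff h0' (mul_pos hE hQp)).1 h4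
      · rw [Set.indicator_of_notMem hm]; exact mul_nonneg hE.le (hQ0 y)
    · have h1 : e (v, y) = q (v, y) := by simp [he, hd]
      have h2 : g (v, y) = 0 := by simp [hg, hd]
      rw [h1, h2, mul_zero, add_zero]
      exact Set.indicator_le_self' (fun _ _ => hq0 _) _
  have hfin := (hqs.indicator T).tsum_le_tsum hpt
    (hes.add (hg1.summable.mul_left (Real.exp (-((n : ℝ) * γ)))))
  rw [hes.tsum_add (hg1.summable.mul_left _), tsum_mul_left, hg1.tsum_eq, ← heq, ← hprob] at hfin
  linarith


end ISC
end

section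
/- Converse theorem (Theorem 4.2). Let V = {Vⁿ} be a general source and W = {Wⁿ} a general channel, and suppose V is transmissible over W. Then there exists a channel input X = {Xⁿ} (possibly correlated with the source) such that for every sequence {γₙ} of reals with γₙ > 0, γₙ → 0 and nγₙ → ∞, it holds that limₙ Pr{ (1/n) log( Wⁿ(Yⁿ|Xⁿ) / P_{Yⁿ}(Yⁿ) ) ≤ (1/n) log( 1 / P_{Vⁿ}(Vⁿ) ) − γₙ } = 0, where Yⁿ is the channel output due to input Xⁿ. -/
open Filter Real Topology

namespace ISC

theorem aux_hasSum {α β : Type*} (p : α → ℝ) (hp : IsPMF p) (K : α → β → ℝ)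
    (hK : ∀ a, IsPMF (K a)) : HasSum (fun z : α × β => p z.1 * K z.1 z.2) 1 := by
  have h1 : ∀ a, HasSum (fun b => p a * K a b) (p a) := fun a => by
    simpa using (hK a).2.mul_left (p a)
  have hs : Summable (fun z : α × β => p z.1 * K z.1 z.2) := by
    rw [summable_prod_of_nonneg (fun z => mul_nonneg (hp.1 _) ((hK _).1 _))]
    refine ⟨fun a => (h1 a).summable, ?_⟩
    simp only [(h1 _).tsum_eq]
    exact hp.2.summable
  have := hs.hasSum.prod_fiberwise h1
  rw [← this.unique hp.2]
  exact hs.hasSum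

theorem aux_bound {𝒱 𝒳 𝒴 : Type*} [DecidableEq 𝒳] {n : ℕ} (hn : 0 < n)
    (PV : Word 𝒱 n → ℝ) (hPV : IsPMF PV)
    (W : Word 𝒳 n → Word 𝒴 n → ℝ) (hW : ∀ x, IsPMF (W x))
    (φ : Word 𝒱 n → Word 𝒳 n) (ψ : Word 𝒴 n → Word 𝒱 n) (γ : ℝ) :
    prob (jointLaw (codeInput PV φ) W)
      {z : Word 𝒱 n × Word 𝒳 n × Word 𝒴 n |
        (1 / (n : ℝ)) * Real.log (W z.2.1 z.2.2 / outDist (codeInput PV φ) W z.2.2) ≤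
          (1 / (n : ℝ)) * Real.log (1 / PV z.1) - γ}
      ≤ errProb PV W φ ψ + Real.exp (-((n : ℝ) * γ)) := by
  classical
  have hq := aux_hasSum PV hPV (fun v => W (φ v)) (fun v => hW _)
  have hqnn : ∀ v y, 0 ≤ PV v * W (φ v) y := fun v y => mul_nonneg (hPV.1 _) ((hW _).1 _)
  -- output distribution
  have hout : ∀ y, HasSum (fun v => PV v * W (φ v) y) (outDist (codeInput PV φ) W y) := by
    intro y
    have hs : Summable (fun v => PV v * W (φ v) y) :=
      hq.summable.comp_injective (i := fun v => (v, y)) (fun a b h => (Prod.mk.inj h).1)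
    have hinj : Function.Injective (fun v : Word 𝒱 n => (v, φ v)) :=
      fun a b h => (Prod.mk.inj h).1
    have : outDist (codeInput PV φ) W y = ∑' v, PV v * W (φ v) y := by
      unfold outDist
      rw [← hinj.tsum_eq]
      · simp [codeInput]
      · rintro ⟨v, x⟩ h
        by_cases hx : x = φ v
        · exact ⟨v, by simp [hx]⟩
        · simp [codeInput, hx] at h
    rw [this]
    exact hs.hasSum
  have hout1 : HasSum (outDist (codeInput PV φ) W) 1 := by
    have h2 : HasSum (fun z : Word 𝒴 n × Word 𝒱 n => PV z.2 * W (φ z.2) z.1) 1 :=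
      (Equiv.prodComm (Word 𝒴 n) (Word 𝒱 n)).hasSum_iff.2 hq
    exact h2.prod_fiberwise hout
  have houtnn : ∀ y, 0 ≤ outDist (codeInput PV φ) W y := fun y => (hout y).nonneg (fun v => hqnn v y)
  have hle : ∀ v y, PV v * W (φ v) y ≤ outDist (codeInput PV φ) W y := fun v y =>
    le_hasSum (hout y) v (fun v' _ => hqnn v' y)
  set E := Real.exp (-((n : ℝ) * γ)) with hE
  -- the error part
  have herr : HasSum (fun z : Word 𝒱 n × Word 𝒴 n =>
      if ψ z.2 ≠ z.1 then PV z.1 * W (φ z.1) z.2 else 0) (errProb PV W φ ψ) := by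
    have hs : Summable (fun z : Word 𝒱 n × Word 𝒴 n =>
      if ψ z.2 ≠ z.1 then PV z.1 * W (φ z.1) z.2 else 0) := by
      refine Summable.of_nonneg_of_le (fun z => ?_) (fun z => ?_) hq.summable
      · split_ifs
        · exact hqnn _ _
        · exact le_rfl
      · split_ifs
        · exact le_rfl
        · exact hqnn _ _
    have : errProb PV W φ ψ = ∑' z : Word 𝒱 n × Word 𝒴 n,
      if ψ z.2 ≠ z.1 then PV z.1 * W (φ z.1) z.2 else 0 := by
      rw [hs.tsum_prod]
      unfold errProb prob
      refine tsum_congr fun v => ?_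
      rw [← tsum_mul_left]
      refine tsum_congr fun y => ?_
      simp [Set.indicator_apply]
    rw [this]
    exact hs.hasSum
  have hi1 : Function.Injective
      (fun z : Word 𝒱 n × Word 𝒴 n => ((z.1, φ z.1, z.2) : Word 𝒱 n × Word 𝒳 n × Word 𝒴 n)) := by
    rintro ⟨a, b⟩ ⟨c, d⟩ h
    simp only [Prod.mk.injEq] at h ⊢
    exact ⟨h.1, h.2.2⟩
  have hi2 : Function.Injective
      (fun y : Word 𝒴 n => ((ψ y, φ (ψ y), y) : Word 𝒱 n × Word 𝒳 n × Word 𝒴 n)) := by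
    intro a b h
    simp only [Prod.mk.injEq] at h
    exact h.2.2
  have hf1 : HasSum (fun z : Word 𝒱 n × Word 𝒳 n × Word 𝒴 n =>
      if z.2.1 = φ z.1 ∧ ψ z.2.2 ≠ z.1 then PV z.1 * W (φ z.1) z.2.2 else 0)
      (errProb PV W φ ψ) := by
    rw [← hi1.hasSum_iff]
    · convert herr using 2
      simp
    · rintro ⟨v, x, y⟩ h
      rw [if_neg]
      rintro ⟨h1, -⟩
      exact h ⟨(v, y), by simp at h1; simp [h1]⟩
  have hf2 : HasSum (fun z : Word 𝒱 n × Word 𝒳 n × Word 𝒴 n =>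
      if z.2.1 = φ z.1 ∧ ψ z.2.2 = z.1 then outDist (codeInput PV φ) W z.2.2 * E else 0) E := by
    rw [← hi2.hasSum_iff]
    · have := hout1.mul_right E
      rw [one_mul] at this
      refine Eq.mp (congrArg (fun f => HasSum f E) ?_) this
      funext y
      simp
    · rintro ⟨v, x, y⟩ h
      rw [if_neg]
      rintro ⟨h1, h2⟩
      simp only at h1 h2
      exact h ⟨y, by simp [h1, h2]⟩
  have hf := hf1.add hf2
  have hEpos : 0 < E := Real.exp_pos _
  have hnn : ∀ z, 0 ≤ jointLaw (codeInput PV φ) W z := by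
    rintro ⟨v, x, y⟩
    unfold jointLaw codeInput
    refine mul_nonneg ?_ ((hW _).1 _)
    split_ifs
    · exact hPV.1 _
    · exact le_rfl
  unfold prob
  rw [← hf.tsum_eq]
  have hpt : ∀ z : Word 𝒱 n × Word 𝒳 n × Word 𝒴 n,
      Set.indicator {z : Word 𝒱 n × Word 𝒳 n × Word 𝒴 n |
        (1 / (n : ℝ)) * Real.log (W z.2.1 z.2.2 / outDist (codeInput PV φ) W z.2.2) ≤
          (1 / (n : ℝ)) * Real.log (1 / PV z.1) - γ} (jointLaw (codeInput PV φ) W) z ≤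
      (if z.2.1 = φ z.1 ∧ ψ z.2.2 ≠ z.1 then PV z.1 * W (φ z.1) z.2.2 else 0) +
      (if z.2.1 = φ z.1 ∧ ψ z.2.2 = z.1 then outDist (codeInput PV φ) W z.2.2 * E else 0) := by
    rintro ⟨v, x, y⟩
    rw [Set.indicator_apply]
    simp only [Set.mem_ofPred_eq, jointLaw, codeInput]
    by_cases hx : x = φ v
    · subst hx
      by_cases hy : ψ y = v
      · simp only [hy, ne_eq, not_true_eq_false, and_false, if_false, if_true, and_self, zero_add]
        split_ifs with hS
        · rcases (hPV.1 v).eq_or_lt with h0 | hv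
          · rw [← h0, zero_mul]
            exact mul_nonneg (houtnn y) hEpos.le
          rcases ((hW (φ v)).1 y).eq_or_lt with h0 | hw
          · rw [← h0, mul_zero]
            exact mul_nonneg (houtnn y) hEpos.le
          have hPY : 0 < outDist (codeInput PV φ) W y := lt_of_lt_of_le (mul_pos hv hw) (hle v y)
          change (1 / (n : ℝ)) * Real.log (W (φ v) y / outDist (codeInput PV φ) W y) ≤ _ at hS
          rw [Real.log_div hw.ne' hPY.ne', one_div (PV v), Real.log_inv] at hS
          have hn' : (0 : ℝ) < n := by exact_mod_cast hn
          have h3 : Real.log (W (φ v) y) - Real.log (outDist (codeInput PV φ) W y)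
              ≤ - Real.log (PV v) - n * γ := by
            have := mul_le_mul_of_nonneg_left hS hn'.le
            field_simp at this
            linarith
          rw [← Real.log_le_log_iff (mul_pos hv hw) (mul_pos hPY hEpos),
            Real.log_mul hv.ne' hw.ne', Real.log_mul hPY.ne' hEpos.ne', hE, Real.log_exp]
          linarith
        · exact mul_nonneg (houtnn y) hEpos.le
      · simp only [hy, ne_eq, not_false_eq_true, and_false, if_false, if_true, and_self, add_zero]
        split_ifs
        · exact le_rfl
        · exact hqnn v y
    · simp [hx]
  refine Summable.tsum_le_tsum hpt ?_ hf.summable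
  exact Summable.of_nonneg_of_le (fun z => Set.indicator_nonneg (fun z _ => hnn z) z) hpt hf.summable

/-- **Converse theorem** (Theorem 4.2). -/
theorem converse_theorem
    {𝒱 𝒳 𝒴 : Type} [Countable 𝒱] [Countable 𝒳] [Countable 𝒴]
    (PV : (n : ℕ) → Word 𝒱 n → ℝ) (hPV : ∀ n, IsPMF (PV n))
    (W : (n : ℕ) → Word 𝒳 n → Word 𝒴 n → ℝ) (hW : ∀ n x, IsPMF (W n x))
    (htrans : Transmissible PV W) :
    ∃ PVX : (n : ℕ) → Word 𝒱 n × Word 𝒳 n → ℝ,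
      (∀ n, IsPMF (PVX n)) ∧
      (∀ n v, (∑' x : Word 𝒳 n, PVX n (v, x)) = PV n v) ∧
      ∀ γ : ℕ → ℝ, (∀ n, 0 < γ n) → Tendsto γ atTop (nhds 0) →
        Tendsto (fun n : ℕ => (n : ℝ) * γ n) atTop atTop →
        Tendsto (fun n =>
          prob (jointLaw (PVX n) (W n))
            {z : Word 𝒱 n × Word 𝒳 n × Word 𝒴 n |
              (1 / (n : ℝ)) * Real.log (W n z.2.1 z.2.2 / outDist (PVX n) (W n) z.2.2) ≤
                (1 / (n : ℝ)) * Real.log (1 / PV n z.1) - γ n}) atTop (nhds 0) := by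
  classical
  obtain ⟨φ, ψ, h⟩ := htrans
  refine ⟨fun n => codeInput (PV n) (φ n), fun n => ⟨?_, ?_⟩, ?_, ?_⟩
  · intro z
    dsimp only [codeInput]
    split_ifs
    · exact (hPV n).1 _
    · exact le_rfl
  · have hinj : Function.Injective (fun v : Word 𝒱 n => (v, φ n v)) :=
      fun a b h => (Prod.mk.inj h).1
    rw [← hinj.hasSum_iff]
    · convert (hPV n).2 using 1
      funext v
      simp [codeInput]
    · rintro ⟨v, x⟩ h
      dsimp only [codeInput]
      rw [if_neg]
      intro hx
      exact h ⟨v, by simp [hx]⟩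
  · intro n v
    simp [codeInput]
  · intro γ _ _ hγ
    have hlim : Tendsto (fun n => errProb (PV n) (W n) (φ n) (ψ n)
        + Real.exp (-((n : ℝ) * γ n))) atTop (nhds 0) := by
      simpa using h.add (Real.tendsto_exp_neg_atTop_nhds_zero.comp hγ)
    refine squeeze_zero' (Eventually.of_forall fun n => ?_) ?_ hlim
    · refine tsum_nonneg fun z => Set.indicator_nonneg (fun z _ => ?_) z
      dsimp only [jointLaw, codeInput]
      refine mul_nonneg ?_ ((hW _ _).1 _)
      split_ifs
      · exact (hPV n).1 _
      · exact le_rfl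
    · filter_upwards [eventually_gt_atTop 0] with n hn
      exact aux_bound hn (PV n) (hPV n) (W n) (hW n) (φ n) (ψ n) (γ n)

end ISC
end

section
/- ε-Converse theorem (Theorem 5.2). Let V = {Vⁿ} be a general source, W = {Wⁿ} a general channel, and 0 ≤ ε < 1, and suppose V is ε-transmissible over W. Then there exists a channel input X = {Xⁿ} (possibly correlated with the source) such that for every sequence {γₙ} with γₙ > 0, γₙ → 0, nγₙ → ∞, it holds that limsupₙ Pr{ (1/n) log( Wⁿ(Yⁿ|Xⁿ)/P_{Yⁿ}(Yⁿ) ) ≤ (1/n) log( 1/P_{Vⁿ}(Vⁿ) ) − γₙ } ≤ ε, where Yⁿ is the channel output due to input Xⁿ. -/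
open Filter Real Topology

namespace ISC

section helpers
variable {𝒱 𝒳 𝒴 : Type} {n : ℕ}

lemma hasSum_f {PV : Word 𝒱 n → ℝ} (hPV : IsPMF PV)
    {W : Word 𝒳 n → Word 𝒴 n → ℝ} (hW : ∀ x, IsPMF (W x)) (φ : Word 𝒱 n → Word 𝒳 n) :
    HasSum (fun p : Word 𝒱 n × Word 𝒴 n => PV p.1 * W (φ p.1) p.2) 1 := by
  have h1 : ∀ v, HasSum (fun y => PV v * W (φ v) y) (PV v) := fun v => by
    simpa using (hW (φ v)).2.mul_left (PV v)
  have hs : Summable (fun p : Word 𝒱 n × Word 𝒴 n => PV p.1 * W (φ p.1) p.2) := by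
    rw [summable_prod_of_nonneg (fun p => mul_nonneg (hPV.1 _) ((hW _).1 _))]
    refine ⟨fun v => (h1 v).summable, ?_⟩
    simp only [fun v => (h1 v).tsum_eq]
    exact hPV.2.summable
  have := hs.hasSum.prod_fiberwise h1
  rw [← this.unique hPV.2]
  exact hs.hasSum

open Classical in
lemma outDist_eq (PV : Word 𝒱 n → ℝ) (W : Word 𝒳 n → Word 𝒴 n → ℝ)
    (φ : Word 𝒱 n → Word 𝒳 n) (y : Word 𝒴 n) :
    outDist (codeInput PV φ) W y = ∑' v, PV v * W (φ v) y := by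
  have hi : Function.Injective (fun v : Word 𝒱 n => (v, φ v)) := fun a b h => (Prod.ext_iff.1 h).1
  unfold outDist
  rw [← hi.tsum_eq]
  · simp [codeInput]
  · rintro ⟨v, x⟩ h
    by_cases hx : x = φ v
    · exact ⟨v, by simp [hx]⟩
    · simp [codeInput, hx] at h

open Classical in
lemma prob_eq (PV : Word 𝒱 n → ℝ) (W : Word 𝒳 n → Word 𝒴 n → ℝ)
    (φ : Word 𝒱 n → Word 𝒳 n) (S : Set (Word 𝒱 n × Word 𝒳 n × Word 𝒴 n)) :
    prob (jointLaw (codeInput PV φ) W) S =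
      ∑' p : Word 𝒱 n × Word 𝒴 n, if (p.1, φ p.1, p.2) ∈ S then PV p.1 * W (φ p.1) p.2 else 0 := by
  have hi : Function.Injective (fun p : Word 𝒱 n × Word 𝒴 n => (p.1, φ p.1, p.2)) := by
    rintro ⟨a, b⟩ ⟨c, d⟩ h
    simp only [Prod.mk.injEq] at h
    simp [h.1, h.2.2]
  unfold prob
  rw [← hi.tsum_eq]
  · simp [codeInput, jointLaw, Set.indicator]
  · rintro ⟨v, x, y⟩ h
    by_cases hx : x = φ v
    · exact ⟨(v, y), by simp [hx]⟩
    · simp [codeInput, jointLaw, hx] at h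

open Classical in
lemma errProb_eq {PV : Word 𝒱 n → ℝ} (hPV : IsPMF PV)
    {W : Word 𝒳 n → Word 𝒴 n → ℝ} (hW : ∀ x, IsPMF (W x)) (φ : Word 𝒱 n → Word 𝒳 n)
    (ψ : Word 𝒴 n → Word 𝒱 n) :
    HasSum (fun p : Word 𝒱 n × Word 𝒴 n => if ψ p.2 ≠ p.1 then PV p.1 * W (φ p.1) p.2 else 0)
      (errProb PV W φ ψ) := by
  have hs : Summable (fun p : Word 𝒱 n × Word 𝒴 n =>
      if ψ p.2 ≠ p.1 then PV p.1 * W (φ p.1) p.2 else 0) := by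
    refine Summable.of_nonneg_of_le (fun p => ?_) (fun p => ?_) (hasSum_f hPV hW φ).summable
    · have := mul_nonneg (hPV.1 p.1) ((hW (φ p.1)).1 p.2)
      split_ifs <;> simp [this]
    · have := mul_nonneg (hPV.1 p.1) ((hW (φ p.1)).1 p.2)
      split_ifs <;> simp [this]
  have : errProb PV W φ ψ = ∑' p : Word 𝒱 n × Word 𝒴 n,
      if ψ p.2 ≠ p.1 then PV p.1 * W (φ p.1) p.2 else 0 := by
    rw [hs.tsum_prod]
    unfold errProb prob
    refine tsum_congr fun v => ?_
    rw [← tsum_mul_left]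
    refine tsum_congr fun y => ?_
    simp [Set.indicator]
  rw [this]
  exact hs.hasSum

open Classical in
lemma key {PV : Word 𝒱 n → ℝ} (hPV : IsPMF PV)
    {W : Word 𝒳 n → Word 𝒴 n → ℝ} (hW : ∀ x, IsPMF (W x)) (φ : Word 𝒱 n → Word 𝒳 n)
    (ψ : Word 𝒴 n → Word 𝒱 n) (hn : 0 < n) (γ : ℝ) :
    prob (jointLaw (codeInput PV φ) W)
            {z : Word 𝒱 n × Word 𝒳 n × Word 𝒴 n |
              (1 / (n : ℝ)) * Real.log (W z.2.1 z.2.2 / outDist (codeInput PV φ) W z.2.2) ≤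
                (1 / (n : ℝ)) * Real.log (1 / PV z.1) - γ}
      ≤ errProb PV W φ ψ + Real.exp (-(n * γ)) := by
  have hf := hasSum_f hPV hW φ
  have hf0 : ∀ v y, 0 ≤ PV v * W (φ v) y := fun v y => mul_nonneg (hPV.1 v) ((hW (φ v)).1 y)
  have hsw : HasSum (fun p : Word 𝒴 n × Word 𝒱 n => PV p.2 * W (φ p.2) p.1) 1 :=
    ((Equiv.prodComm (Word 𝒴 n) (Word 𝒱 n)).hasSum_iff).2 hf
  have hfib : ∀ y, HasSum (fun v => PV v * W (φ v) y) (outDist (codeInput PV φ) W y) := fun y => by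
    rw [outDist_eq]
    exact (hsw.summable.prod_factor y).hasSum
  have hQ : HasSum (outDist (codeInput PV φ) W) 1 := hsw.prod_fiberwise hfib
  have hQ0 : ∀ y, 0 ≤ outDist (codeInput PV φ) W y := fun y => (hfib y).nonneg fun v => hf0 v y
  set Q := outDist (codeInput PV φ) W with hQdef
  have hi : Function.Injective (fun y : Word 𝒴 n => (ψ y, y)) := fun a b h => (Prod.ext_iff.1 h).2
  have hg : HasSum (fun p : Word 𝒱 n × Word 𝒴 n => if ψ p.2 = p.1 then Q p.2 else 0) 1 := by
    rw [← hi.hasSum_iff]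
    · simpa [Function.comp_def] using hQ
    · rintro ⟨v, y⟩ h
      rw [if_neg]
      intro hh
      exact h ⟨y, Prod.ext hh rfl⟩
  have hR := (errProb_eq hPV hW φ ψ).add (hg.mul_left (Real.exp (-(n * γ))))
  rw [mul_one] at hR
  rw [prob_eq]
  have hSm : ∀ z, z ∈ {z : Word 𝒱 n × Word 𝒳 n × Word 𝒴 n |
              (1 / (n : ℝ)) * Real.log (W z.2.1 z.2.2 / Q z.2.2) ≤
                (1 / (n : ℝ)) * Real.log (1 / PV z.1) - γ} → (1 / (n : ℝ)) * Real.log (W z.2.1 z.2.2 / Q z.2.2) ≤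
                (1 / (n : ℝ)) * Real.log (1 / PV z.1) - γ := fun z hz => hz
  generalize {z : Word 𝒱 n × Word 𝒳 n × Word 𝒴 n |
              (1 / (n : ℝ)) * Real.log (W z.2.1 z.2.2 / Q z.2.2) ≤
                (1 / (n : ℝ)) * Real.log (1 / PV z.1) - γ} = S at hSm ⊢
  have hle : ∀ v y, (if (v, φ v, y) ∈ S then PV v * W (φ v) y else 0) ≤
      (if ψ y ≠ v then PV v * W (φ v) y else 0)
        + Real.exp (-(n * γ)) * (if ψ y = v then Q y else 0) := by
    intro v y
    by_cases hv : ψ y = v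
    · simp only [hv, ne_eq, not_true_eq_false, if_false, if_true, zero_add]
      have hpos := mul_nonneg (Real.exp_pos (-(n * γ))).le (hQ0 y)
      split_ifs with hS
      · rcases (hf0 v y).eq_or_lt with h0 | h0
        · rw [← h0]; exact hpos
        · have hP : 0 < PV v := (hPV.1 v).lt_of_ne' fun h => by simp [h] at h0
          have hWp : 0 < W (φ v) y := ((hW (φ v)).1 y).lt_of_ne' fun h => by simp [h] at h0
          have hQp : 0 < Q y := h0.trans_le (le_hasSum (hfib y) v fun u _ => hf0 u y)
          replace hS := hSm _ hS
          dsimp only at hS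
          have hn' : (0:ℝ) < n := by exact_mod_cast hn
          rw [Real.log_div hWp.ne' hQp.ne', one_div (PV v), Real.log_inv] at hS
          have h2 := mul_le_mul_of_nonneg_left hS hn'.le
          have e1 : (n:ℝ) * (1 / n * (Real.log (W (φ v) y) - Real.log (Q y)))
            = Real.log (W (φ v) y) - Real.log (Q y) := by field_simp
          have e2 : (n:ℝ) * (1 / n * (-Real.log (PV v)) - γ) = -Real.log (PV v) - n * γ := by
            field_simp
          rw [e1, e2] at h2
          rw [← Real.log_le_log_iff h0 (mul_pos (Real.exp_pos _) hQp),
            Real.log_mul hP.ne' hWp.ne', Real.log_mul (Real.exp_pos _).ne' hQp.ne', Real.log_exp]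
          linarith
      · exact hpos
    · simp only [hv, ne_eq, not_false_eq_true, if_true, if_false, mul_zero, add_zero]
      split_ifs
      · exact le_rfl
      · exact hf0 v y
  have hsum : Summable (fun p : Word 𝒱 n × Word 𝒴 n =>
      if (p.1, φ p.1, p.2) ∈ S then PV p.1 * W (φ p.1) p.2 else 0) := by
    refine Summable.of_nonneg_of_le (fun p => ?_) (fun p => hle p.1 p.2) hR.summable
    have := hf0 p.1 p.2
    split_ifs
    · exact this
    · exact le_rfl
  have hle2 : ∀ p : Word 𝒱 n × Word 𝒴 n, _ := fun p => hle p.1 p.2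
  have hfin := hasSum_le hle2 hsum.hasSum hR
  exact hfin

end helpers

/-- **ε-Converse theorem** (Theorem 5.2). -/
theorem eps_converse_theorem
    {𝒱 𝒳 𝒴 : Type} [Countable 𝒱] [Countable 𝒳] [Countable 𝒴]
    (ε : ℝ) (hε0 : 0 ≤ ε) (hε1 : ε < 1)
    (PV : (n : ℕ) → Word 𝒱 n → ℝ) (hPV : ∀ n, IsPMF (PV n))
    (W : (n : ℕ) → Word 𝒳 n → Word 𝒴 n → ℝ) (hW : ∀ n x, IsPMF (W n x))
    (htrans : ∃ (φ : (n : ℕ) → Word 𝒱 n → Word 𝒳 n)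
        (ψ : (n : ℕ) → Word 𝒴 n → Word 𝒱 n),
      Filter.limsup (fun n => errProb (PV n) (W n) (φ n) (ψ n)) atTop ≤ ε) :
    ∃ PVX : (n : ℕ) → Word 𝒱 n × Word 𝒳 n → ℝ,
      (∀ n, IsPMF (PVX n)) ∧
      (∀ n v, (∑' x : Word 𝒳 n, PVX n (v, x)) = PV n v) ∧
      ∀ γ : ℕ → ℝ, (∀ n, 0 < γ n) → Tendsto γ atTop (nhds 0) →
        Tendsto (fun n : ℕ => (n : ℝ) * γ n) atTop atTop →
        Filter.limsup (fun n =>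
          prob (jointLaw (PVX n) (W n))
            {z : Word 𝒱 n × Word 𝒳 n × Word 𝒴 n |
              (1 / (n : ℝ)) * Real.log (W n z.2.1 z.2.2 / outDist (PVX n) (W n) z.2.2) ≤
                (1 / (n : ℝ)) * Real.log (1 / PV n z.1) - γ n}) atTop ≤ ε := by
  classical
  obtain ⟨φ, ψ, hlim⟩ := htrans
  have hmarg : ∀ n v, HasSum (fun x => codeInput (PV n) (φ n) (v, x)) (PV n v) := fun n v => by
    simpa [codeInput] using hasSum_ite_eq (φ n v) (PV n v)
  refine ⟨fun n => codeInput (PV n) (φ n), fun n => ?_, fun n v => (hmarg n v).tsum_eq, ?_⟩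
  · have h0 : ∀ a, 0 ≤ codeInput (PV n) (φ n) a := fun a => by
      unfold codeInput
      split_ifs
      · exact (hPV n).1 _
      · exact le_rfl
    refine ⟨h0, ?_⟩
    have hs : Summable (codeInput (PV n) (φ n)) := by
      rw [summable_prod_of_nonneg h0]
      refine ⟨fun v => (hmarg n v).summable, ?_⟩
      simp only [fun v => (hmarg n v).tsum_eq]
      exact (hPV n).2.summable
    rw [← (hs.hasSum.prod_fiberwise (hmarg n)).unique (hPV n).2]
    exact hs.hasSum
  · intro γ _ _ hγ
    have herr1 : ∀ n, errProb (PV n) (W n) (φ n) (ψ n) ≤ 1 := fun n => by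
      refine hasSum_le (fun p => ?_) (errProb_eq (hPV n) (hW n) (φ n) (ψ n))
        (hasSum_f (hPV n) (hW n) (φ n))
      have := mul_nonneg ((hPV n).1 p.1) ((hW n (φ n p.1)).1 p.2)
      split_ifs
      · exact le_rfl
      · exact this
    refine le_of_forall_pos_le_add fun η hη => ?_
    have h1 : ∀ᶠ n in atTop, errProb (PV n) (W n) (φ n) (ψ n) < ε + η / 2 :=
      eventually_lt_of_limsup_lt (by linarith)
        (isBoundedUnder_of ⟨1, herr1⟩)
    have h2 : ∀ᶠ n : ℕ in atTop, Real.exp (-((n:ℝ) * γ n)) < η / 2 :=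
      (Real.tendsto_exp_neg_atTop_nhds_zero.comp hγ).eventually_lt_const (by linarith)
    refine limsup_le_of_le ?_ ?_
    · refine IsBoundedUnder.isCoboundedUnder_le (isBoundedUnder_of ⟨0, fun n => ?_⟩)
      refine tsum_nonneg fun z => Set.indicator_nonneg (fun z _ => ?_) z
      unfold jointLaw codeInput
      refine mul_nonneg ?_ ((hW n _).1 _)
      dsimp only
      split_ifs
      · exact (hPV n).1 _
      · exact le_rfl
    · filter_upwards [h1, h2, eventually_gt_atTop 0] with n a b c
      have := key (hPV n) (hW n) (φ n) (ψ n) c (γ n)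
      linarith

end ISC
end
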